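/- Fix partitions μ and ν and a natural number j with 0 ≤ j ≤ |μ| + |ν|. Then there exists a polynomial P ∈ ℚ[X] of degree at most j, whose coefficient of X^j equals 2^j · Σ_{l=0}^{j} (−1)^l · C(|μ|, j−l) · C(|ν|, l), such that for every integer k ≥ 0 the coefficient of X^{N_k − 2j} in He_{Φ(μ,ν,k)} equals P(k), where N_k = k(k+1)/2 + 2(|μ|+|ν|) = |Φ(μ,ν,k)|. (That is, for fixed 2-quotient (μ,ν), the j-th coefficient of the remainder polynomial is a polynomial in the core length k of degree at most j with the stated leading coefficient.) -/

import Mathlib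

/-- A partition: a weakly decreasing list of positive integers. -/
def IsPartition (l : List ℕ) : Prop :=
  l.Pairwise (· ≥ ·) ∧ ∀ x ∈ l, 0 < x

/-- The degree vector of a partition: `n_i = λ_i + ℓ(λ) − i` (here `i` is 0-indexed). -/
def degVec (l : List ℕ) (i : Fin l.length) : ℕ :=
  l.get i + (l.length - 1 - (i : ℕ))

/-- The Vandermonde determinant `Δ(n_λ) = ∏_{i<j} (n_j − n_i)` of the degree vector. -/
noncomputable def vanderQ (l : List ℕ) : ℚ :=
  ∏ i : Fin l.length, ∏ j : Fin l.length,
    if (i : ℕ) < (j : ℕ) then ((degVec l j : ℚ) - (degVec l i : ℚ)) else 1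

/-- The Wronskian Hermite polynomial `He_λ = Wr[He_{n_1},…,He_{n_ℓ}] / Δ(n_λ)`. -/
noncomputable def HeW (l : List ℕ) : Polynomial ℚ :=
  Polynomial.C (vanderQ l)⁻¹ *
    (Matrix.of fun i j : Fin l.length =>
      (⇑Polynomial.derivative)^[(i : ℕ)]
        ((Polynomial.hermite (degVec l j)).map (Int.castRingHom ℚ))).det

/-- The content sum `c(λ) = Σ_{(i,j)∈λ} (j − i)`. -/
def contentSum (l : List ℕ) : ℤ :=
  ∑ i : Fin l.length, ∑ j ∈ Finset.Icc 1 (l.get i), ((j : ℤ) - ((i : ℕ) + 1))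

/-- `Phi μ ν k` is the partition with 2-core `(k,k−1,…,2,1)` and 2-quotient `(μ,ν)`:
form the set `D` of `N = 2ℓ(μ) + 2ℓ(ν) + k` distinct naturals
`{2(a_i + ℓ(ν))} ∪ {2t : t < ℓ(ν)} ∪ {2(b_j + ℓ(μ) + k) + 1} ∪ {2t+1 : t < ℓ(μ)+k}`
(where `a`, `b` are the degree vectors of `μ`, `ν`), sort it decreasingly as
`d_1 > … > d_N`, and take the parts `d_i − (N − i)`, discarding zero parts. -/
def Phi (μ ν : List ℕ) (k : ℕ) : List ℕ :=
  let D : Finset ℕ :=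
    ((Finset.univ : Finset (Fin μ.length)).image fun i => 2 * (degVec μ i + ν.length)) ∪
    ((Finset.range ν.length).image fun t => 2 * t) ∪
    ((Finset.univ : Finset (Fin ν.length)).image fun j =>
        2 * (degVec ν j + μ.length + k) + 1) ∪
    ((Finset.range (μ.length + k)).image fun t => 2 * t + 1)
  let s := D.sort (· ≤ ·)
  (((List.range s.length).map fun t => s.getD t 0 - t).reverse).filter
    fun x => decide (0 < x)


namespace WH
open Polynomial Matrix

/-- `M` represents the weighted shift operator on polynomials of degree `< card ι`. -/
def Rep {ι : Type} [Fintype ι] (B : ℕ) (u : ι → ℚ) (W : ι → ℕ → ℚ) (M : Matrix ι ι ℚ) : Prop :=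
  ∀ f : ℚ[X], f.degree < (Fintype.card ι : ℕ) → ∀ i,
    ∑ m ∈ Finset.range B, W i m * f.eval (u i - 2 * (m : ℚ)) = ∑ i', M i i' * f.eval (u i')

theorem rep_exists {ι : Type} [Fintype ι] [DecidableEq ι] (B : ℕ) (u : ι → ℚ)
    (hu : Function.Injective u) (W : ι → ℕ → ℚ) : ∃ M, Rep B u W M := by
  refine ⟨fun i i' => ∑ m ∈ Finset.range B, W i m *
    (Lagrange.basis Finset.univ u i').eval (u i - 2 * (m : ℚ)), ?_⟩
  intro f hf i
  have h := Lagrange.eq_interpolate (s := Finset.univ) (v := u)  hu.injOn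
    (by simpa using hf)
  simp_rw [Finset.sum_mul]
  rw [Finset.sum_comm]
  refine Finset.sum_congr rfl fun m _ => ?_
  conv_lhs => rw [h]
  rw [Lagrange.interpolate_apply, eval_finsetSum, Finset.mul_sum]
  refine Finset.sum_congr rfl fun i' _ => ?_
  rw [eval_mul, eval_C]; ring

theorem rep_reindex {ι κ : Type} [Fintype ι] [Fintype κ] (B : ℕ) (u : ι → ℚ)
    (W : ι → ℕ → ℚ) (M : Matrix ι ι ℚ) (e : κ ≃ ι) (h : Rep B u W M) :
    Rep B (fun i => u (e i)) (fun i => W (e i)) (M.submatrix e e) := by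
  intro f hf i
  rw [h f (by rwa [← Fintype.card_congr e]) (e i)]
  exact (Equiv.sum_comp e (fun i' => M (e i) i' * f.eval (u i'))).symm

theorem rep_shift {ι : Type} [Fintype ι] (B : ℕ) (u : ι → ℚ)
    (W : ι → ℕ → ℚ) (M : Matrix ι ι ℚ) (c : ℚ) (h : Rep B u W M) :
    Rep B (fun i => u i - c) W M := by
  intro f hf i
  have := h (taylor (-c) f) (by rwa [degree_taylor]) i
  simp only [taylor_eval] at this
  rw [← sub_eq_zero] at this ⊢
  rw [← this]
  congr 1
  · refine Finset.sum_congr rfl fun m _ => ?_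
    congr 2; simp only; ring
  · simp only [sub_eq_add_neg]

theorem rep_trunc {ι : Type} [Fintype ι] {B B' : ℕ} {u : ι → ℚ}
    {W : ι → ℕ → ℚ} {M : Matrix ι ι ℚ} (hB : B' ≤ B) (hW : ∀ i m, B' ≤ m → W i m = 0)
    (h : Rep B u W M) : Rep B' u W M := by
  intro f hf i
  rw [← h f hf i]
  refine Finset.sum_subset (by simpa using hB) ?_
  intro m _ hm
  rw [hW i m (by simpa using hm), zero_mul]

theorem rep_det {n : ℕ} {B : ℕ} {u : Fin n → ℚ}
    {W : Fin n → ℕ → ℚ} {M : Matrix (Fin n) (Fin n) ℚ} (h : Rep B u W M)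
    (p : Fin n → ℚ[X]) (hp : ∀ s, (p s).natDegree = s) (hm : ∀ s, (p s).Monic) :
    (Matrix.of fun i s : Fin n =>
      ∑ m ∈ Finset.range B, W i m * (p s).eval (u i - 2 * (m : ℚ))).det =
      M.det * (vandermonde u).det := by
  rw [det_eval_matrixOfPolynomials_eq_det_vandermonde u p hp hm, ← det_mul]
  congr 1
  ext i s
  rw [mul_apply, of_apply, h]
  · rfl
  · rw [degree_eq_natDegree (hm s).ne_zero, hp]
    simp

theorem rep_remove {β τ : Type} [Fintype β] [Fintype τ] [DecidableEq β] [DecidableEq τ] {B : ℕ}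
    {u : β ⊕ τ → ℚ} {W : β ⊕ τ → ℕ → ℚ} {M : Matrix (β ⊕ τ) (β ⊕ τ) ℚ}
    (hB : 0 < B) (hu : Function.Injective u) (h : Rep B u W M)
    (hW0 : ∀ b, W (Sum.inl b) 0 = 1)
    (hcl : ∀ b m, W (Sum.inl b) m = 0 ∨ ∃ b', u (Sum.inl b') = u (Sum.inl b) - 2 * (m : ℚ))
    (W' : τ → ℕ → ℚ)
    (hW' : ∀ t m, W (Sum.inr t) m * ∏ b, (u (Sum.inr t) - 2 * (m : ℚ) - u (Sum.inl b)) =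
      (∏ b, (u (Sum.inr t) - u (Sum.inl b))) * W' t m) :
    ∃ M' : Matrix τ τ ℚ, Rep B (fun t => u (Sum.inr t)) W' M' ∧ M'.det = M.det := by
  classical
  have hne : ∀ t, (∏ b, (u (Sum.inr t) - u (Sum.inl b))) ≠ 0 := by
    intro t
    rw [Finset.prod_ne_zero_iff]
    intro b _ hb
    have := hu (sub_eq_zero.mp hb)
    simp at this
  -- entries of M via Lagrange basis
  have hM : ∀ i i', M i i' = ∑ m ∈ Finset.range B, W i m *
      (Lagrange.basis Finset.univ u i').eval (u i - 2 * (m : ℚ)) := by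
    intro i i'
    rw [h]
    · rw [Finset.sum_eq_single i']
      · rw [Lagrange.eval_basis_self hu.injOn (Finset.mem_univ _), mul_one]
      · intro j _ hj
        rw [Lagrange.eval_basis_of_ne hj.symm (Finset.mem_univ _), mul_zero]
      · simp
    · rw [Lagrange.degree_basis hu.injOn (Finset.mem_univ _), Finset.card_univ]
      have : 0 < Fintype.card (β ⊕ τ) := Fintype.card_pos_iff.mpr ⟨i'⟩
      exact_mod_cast Nat.sub_lt this one_pos
  have h12 : M.toBlocks₁₂ = 0 := by
    ext b t
    change M (Sum.inl b) (Sum.inr t) = 0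
    rw [hM]
    refine Finset.sum_eq_zero fun m _ => ?_
    rcases hcl b m with h0 | ⟨b', hb'⟩
    · rw [h0, zero_mul]
    · rw [← hb', Lagrange.eval_basis_of_ne (by simp) (Finset.mem_univ _), mul_zero]
  have h11 : M.toBlocks₁₁.det = 1 := by
    let _ : LinearOrder β := LinearOrder.lift' (fun b => u (Sum.inl b))
      (fun x y hxy => by simpa using hu hxy)
    have htri : M.toBlocks₁₁.BlockTriangular OrderDual.toDual := by
      intro b b' hbb
      have hlt : u (Sum.inl b) < u (Sum.inl b') := hbb
      change M (Sum.inl b) (Sum.inl b') = 0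
      rw [hM]
      refine Finset.sum_eq_zero fun m _ => ?_
      rcases hcl b m with h0 | ⟨c, hc⟩
      · rw [h0, zero_mul]
      · rw [← hc, Lagrange.eval_basis_of_ne _ (Finset.mem_univ _), mul_zero]
        intro hcb
        rw [← hcb] at hc
        have : (0 : ℚ) ≤ m := Nat.cast_nonneg m
        linarith
    have := det_of_isLowerTriangular _ htri
    have hdet : M.toBlocks₁₁.det = ∏ i, M.toBlocks₁₁ i i := by
      convert this
    rw [hdet]
    refine Finset.prod_eq_one fun b _ => ?_
    change M (Sum.inl b) (Sum.inl b) = 1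
    rw [hM, Finset.sum_eq_single 0]
    · rw [hW0]
      simp [Lagrange.eval_basis_self hu.injOn]
    · intro m _ hm
      rcases hcl b m with h0 | ⟨c, hc⟩
      · rw [h0, zero_mul]
      · rw [← hc, Lagrange.eval_basis_of_ne _ (Finset.mem_univ _), mul_zero]
        intro hcb
        rw [← hcb] at hc
        have : (0 : ℚ) < m := by exact_mod_cast Nat.pos_of_ne_zero hm
        linarith
    · intro h0; simp at h0; omega
  have hdetM : M.det = M.toBlocks₂₂.det := by
    conv_lhs => rw [← fromBlocks_toBlocks M, h12]
    rw [det_fromBlocks_zero₁₂, h11, one_mul]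
  set π : τ → ℚ := fun t => ∏ b, (u (Sum.inr t) - u (Sum.inl b)) with hπ
  refine ⟨diagonal (fun t => (π t)⁻¹) * M.toBlocks₂₂ * diagonal π, ?_, ?_⟩
  · intro f hf t
    have hq : (∏ b : β, (X - C (u (Sum.inl b)))).degree = ((Fintype.card β : ℕ) : WithBot ℕ) := by
      rw [degree_prod]; simp
    have key := h ((∏ b : β, (X - C (u (Sum.inl b)))) * f) (by
      by_cases hf0 : f = 0
      · simp [hf0]
      rw [degree_mul, hq, Fintype.card_sum]
      rw [degree_eq_natDegree hf0] at hf ⊢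
      norm_cast at hf ⊢
      omega) (Sum.inr t)
    rw [Fintype.sum_sum_type] at key
    simp only [eval_mul, eval_prod, eval_sub, eval_X, eval_C] at key
    rw [Finset.sum_eq_zero (s := (Finset.univ : Finset β)), zero_add] at key
    · have k2 : π t * ∑ m ∈ Finset.range B, W' t m * f.eval (u (Sum.inr t) - 2 * (m : ℚ)) =
          ∑ t', M (Sum.inr t) (Sum.inr t') * (π t' * f.eval (u (Sum.inr t'))) := by
        rw [← key, Finset.mul_sum]
        refine Finset.sum_congr rfl fun m _ => ?_
        rw [← mul_assoc, ← hW' t m, mul_assoc]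
      have k3 := congrArg (fun y => (π t)⁻¹ * y) k2
      beta_reduce at k3
      rw [← mul_assoc, inv_mul_cancel₀ (hne t), one_mul] at k3
      rw [k3, Finset.mul_sum]
      refine Finset.sum_congr rfl fun t' _ => ?_
      rw [mul_diagonal, diagonal_mul]
      change _ = (π t)⁻¹ * M (Sum.inr t) (Sum.inr t') * π t' * _
      ring
    · intro b _
      rw [Finset.prod_eq_zero (Finset.mem_univ b) (sub_self _)]
      ring
  · rw [hdetM, det_mul, det_mul, det_diagonal, det_diagonal]
    have : (∏ t, (π t)⁻¹) * ∏ t, π t = 1 := by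
      rw [← Finset.prod_mul_distrib]
      exact Finset.prod_eq_one fun t _ => inv_mul_cancel₀ (hne t)
    linear_combination M.toBlocks₂₂.det * this

end WH

namespace WH
open Polynomial Matrix

/-- The Hermite weights. -/
noncomputable def wt (z u : ℚ) (m : ℕ) : ℚ :=
  z ^ m * ((-1 / 2) ^ m / (m.factorial : ℚ)) * ∏ s ∈ Finset.range (2 * m), (u - (s : ℚ))

theorem prod_eq_descFactorial (n k : ℕ) :
    ∏ s ∈ Finset.range k, ((n : ℚ) - (s : ℚ)) = (n.descFactorial k : ℚ) := by
  induction k with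
  | zero => simp
  | succ k ih =>
    rw [Finset.prod_range_succ, ih, Nat.descFactorial_succ]
    by_cases h : k ≤ n
    · push_cast [Nat.cast_sub h]; ring
    · rw [Nat.descFactorial_eq_zero_iff_lt.mpr (by omega)]; simp

theorem hermite_expand (n B : ℕ) (hB : n < B) :
    (hermite n).map (Int.castRingHom ℚ) = ∑ m ∈ Finset.range B,
      C ((-1 / 2) ^ m / (m.factorial : ℚ) * (n.descFactorial (2 * m) : ℚ)) * X ^ (n - 2 * m) := by
  ext d
  rw [coeff_map, finsetSum_coeff]
  simp only [coeff_C_mul_X_pow]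
  by_cases hd : ∃ p, n = 2 * p + d
  · obtain ⟨p, rfl⟩ := hd
    rw [coeff_hermite_explicit, Finset.sum_eq_single p]
    · have h1 : 2 * p + d - 2 * p = d := by omega
      rw [if_pos h1.symm]
      have h2 : ((2 * p - 1).doubleFactorial : ℚ) * (2 ^ p * p.factorial) =
          ((2 * p).factorial : ℚ) := by
        rcases p with _ | p
        · simp
        · have := Nat.factorial_eq_mul_doubleFactorial (2 * p + 1)
          have h3 := Nat.doubleFactorial_two_mul (p + 1)
          rw [show 2 * (p + 1) - 1 = 2 * p + 1 by omega, show 2 * (p + 1) = 2 * p + 1 + 1 by ring, this]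
          rw [show 2 * (p + 1) = 2 * p + 1 + 1 by ring] at h3
          rw [h3]; push_cast; ring
      have h4 : ((2 * p + d).descFactorial (2 * p) : ℚ) =
          ((2 * p).factorial : ℚ) * ((2 * p + d).choose d : ℚ) := by
        rw [Nat.descFactorial_eq_factorial_mul_choose]
        rw [show (2 * p + d).choose (2 * p) = (2 * p + d).choose d from Nat.choose_symm_add]
        push_cast; ring
      rw [h4, ← h2]
      have h5 : (p.factorial : ℚ) ≠ 0 := by exact_mod_cast p.factorial_ne_zero
      simp only [map_mul, map_pow, map_neg, map_one, Int.coe_castRingHom, Int.cast_natCast]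
      rw [div_pow]
      field_simp
    · intro m _ hm
      by_cases h2 : 2 * m ≤ 2 * p + d
      · rw [if_neg (by omega)]
      · rw [Nat.descFactorial_eq_zero_iff_lt.mpr (by omega)]; simp
    · intro h; simp at h; omega
  · have h0 : (hermite n).coeff d = 0 := by
      by_cases hlt : n < d
      · exact coeff_hermite_of_lt hlt
      · apply coeff_hermite_of_odd_add
        by_contra hodd
        rw [Nat.not_odd_iff_even] at hodd
        obtain ⟨r, hr⟩ := hodd
        exact hd ⟨r - d, by omega⟩
    rw [h0, map_zero]
    symm
    refine Finset.sum_eq_zero fun m _ => ?_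
    by_cases h2 : 2 * m ≤ n
    · rw [if_neg]
      intro hdd
      exact hd ⟨m, by omega⟩
    · rw [Nat.descFactorial_eq_zero_iff_lt.mpr (by omega)]; simp

theorem hermite_deriv_eval (n B i : ℕ) (hB : n < B) (x : ℚ) (hx : x ≠ 0) :
    x ^ i * (derivative^[i] ((hermite n).map (Int.castRingHom ℚ))).eval x =
      x ^ n * ∑ m ∈ Finset.range B, wt (x⁻¹ ^ 2) n m *
        (descPochhammer ℚ i).eval ((n : ℚ) - 2 * (m : ℚ)) := by
  rw [hermite_expand n B hB, iterate_derivative_sum, eval_finsetSum, Finset.mul_sum,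
    Finset.mul_sum]
  refine Finset.sum_congr rfl fun m _ => ?_
  rw [iterate_derivative_C_mul, iterate_derivative_X_pow_eq_natCast_mul]
  unfold wt
  rw [prod_eq_descFactorial]
  by_cases h2 : 2 * m ≤ n
  · rw [show (n : ℚ) - 2 * (m : ℚ) = ((n - 2 * m : ℕ) : ℚ) by push_cast [Nat.cast_sub h2]; ring,
      descPochhammer_eval_eq_descFactorial]
    simp only [eval_mul, eval_C, eval_pow, eval_X, eval_natCast]
    by_cases h3 : i ≤ n - 2 * m
    · have e1 : x ^ n * (x⁻¹ ^ 2) ^ m = x ^ i * x ^ (n - 2 * m - i) := by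
        rw [← pow_add, show i + (n - 2 * m - i) = n - 2 * m by omega, ← pow_mul]
        rw [inv_pow, ← div_eq_mul_inv, div_eq_iff (pow_ne_zero _ hx), ← pow_add]
        congr 1; omega
      linear_combination (-((-1 / 2) ^ m / (m.factorial : ℚ) * (n.descFactorial (2 * m) : ℚ)) *
        ((n - 2 * m).descFactorial i : ℚ)) * e1
    · rw [Nat.descFactorial_eq_zero_iff_lt.mpr (show n - 2 * m < i by omega)]; simp
  · rw [Nat.descFactorial_eq_zero_iff_lt.mpr (show n < 2 * m by omega)]; simp

theorem vanderQ_eq (l : List ℕ) :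
    vanderQ l = (vandermonde fun i => (degVec l i : ℚ)).det := by
  rw [det_vandermonde]
  unfold vanderQ
  refine Finset.prod_congr rfl fun i _ => ?_
  rw [← Finset.prod_filter]
  refine Finset.prod_congr ?_ fun _ _ => rfl
  ext j; simp

theorem sum_degVec (l : List ℕ) :
    ∑ i, degVec l i = l.sum + ∑ i ∈ Finset.range l.length, i := by
  unfold degVec
  rw [Finset.sum_add_distrib]
  congr 1
  · simp
  · rw [Finset.sum_fin_eq_sum_range (fun i : Fin l.length => l.length - 1 - (i : ℕ))]
    rw [← Finset.sum_range_reflect]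
    refine Finset.sum_congr rfl fun i hi => ?_
    have := Finset.mem_range.mp hi
    simp only
    split_ifs <;> omega

theorem HeW_eval (l : List ℕ) (hl : Function.Injective (degVec l)) (B : ℕ)
    (hB : ∀ i, degVec l i < B) (x : ℚ) (hx : x ≠ 0) (M : Matrix (Fin l.length) (Fin l.length) ℚ)
    (hM : Rep B (fun i => (degVec l i : ℚ)) (fun i => wt (x⁻¹ ^ 2) (degVec l i)) M) :
    (HeW l).eval x = x ^ l.sum * M.det := by
  have hv : vanderQ l ≠ 0 := by
    rw [vanderQ_eq, det_vandermonde_ne_zero_iff]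
    intro a b hab
    have hab' : (degVec l a : ℚ) = degVec l b := hab
    exact hl (by exact_mod_cast hab')
  have h1 := rep_det hM (fun s => descPochhammer ℚ s) (fun s => descPochhammer_natDegree _ _)
    (fun s => monic_descPochhammer _ _)
  rw [← vanderQ_eq] at h1
  unfold HeW
  rw [eval_mul, eval_C, ← coe_evalRingHom, RingHom.map_det]
  set E := (evalRingHom x).mapMatrix (of fun i j : Fin l.length =>
      derivative^[(i : ℕ)] ((hermite (degVec l j)).map (Int.castRingHom ℚ))) with hE
  have h2 : (∏ i : Fin l.length, x ^ (i : ℕ)) * E.det =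
      (∏ j, x ^ degVec l j) * (M.det * vanderQ l) := by
    rw [← h1, ← det_transpose (of _), ← det_mul_column, ← det_mul_row]
    congr 1
    ext i j
    simp only [of_apply, transpose_apply, hE, RingHom.mapMatrix_apply, map_apply, coe_evalRingHom]
    exact hermite_deriv_eval _ _ _ (hB j) x hx
  rw [Finset.prod_pow_eq_pow_sum, Finset.prod_pow_eq_pow_sum, sum_degVec, Fin.sum_univ_eq_sum_range (fun i => i), pow_add] at h2
  have h3 : x ^ (∑ i ∈ Finset.range l.length, i) ≠ 0 := pow_ne_zero _ hx
  have h4 : E.det = x ^ l.sum * M.det * vanderQ l := by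
    apply mul_left_cancel₀ h3
    rw [h2]; ring
  rw [h4]
  field_simp

end WH

namespace WH

theorem sorted_split (L : List ℕ) (h : L.Pairwise (· ≤ ·)) :
    ∃ z, L = List.replicate z 0 ++ L.filter (fun x => decide (0 < x)) := by
  induction L with
  | nil => exact ⟨0, rfl⟩
  | cons a L ih =>
    rw [List.pairwise_cons] at h
    obtain ⟨z, hz⟩ := ih h.2
    rcases Nat.eq_zero_or_pos a with rfl | ha
    · refine ⟨z + 1, ?_⟩
      rw [List.replicate_succ, List.filter_cons_of_neg (by simp), List.cons_append, ← hz]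
    · refine ⟨0, ?_⟩
      rw [List.filter_eq_self.mpr]
      · simp
      · intro x hx
        rcases List.mem_cons.mp hx with rfl | hx
        · simpa using ha
        · simpa using lt_of_lt_of_le ha (h.1 x hx)

theorem phi_struct (D : Finset ℕ) (l : List ℕ)
    (hl : l = (((List.range (D.sort (· ≤ ·)).length).map fun t =>
      (D.sort (· ≤ ·)).getD t 0 - t).reverse).filter fun x => decide (0 < x)) :
    ∃ z, (∀ d, d ∈ D ↔ d < z ∨ ∃ i, d = degVec l i + z) ∧ Function.Injective (degVec l) := by
  set s := D.sort (· ≤ ·) with hs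
  have hsm : ∀ i j, (hj : j < s.length) → (hij : i < j) → s.getD i 0 < s.getD j 0 := by
    intro i j hj hij
    have h1 := D.sortedLT_sort
    rw [List.getD_eq_getElem _ _ hj, List.getD_eq_getElem _ _ (hij.trans hj)]
    exact h1.strictMono_get (a := ⟨i, hij.trans hj⟩) (b := ⟨j, hj⟩) hij
  have hge : ∀ t, t < s.length → t ≤ s.getD t 0 := by
    intro t
    induction t with
    | zero => intro _; omega
    | succ t ih =>
      intro ht
      have := hsm t (t + 1) ht (by omega)
      have := ih (by omega)
      omega
  set L := (List.range s.length).map fun t => s.getD t 0 - t with hL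
  have hLs : L.Pairwise (· ≤ ·) := by
    rw [hL, List.pairwise_map]
    have : (List.range s.length).Pairwise (fun a b => a < b ∧ b < s.length) := by
      rw [List.pairwise_iff_getElem]
      intro i j hi hj hij
      simp at hi hj ⊢
      omega
    refine this.imp ?_
    rintro a b ⟨hab, hb⟩
    obtain ⟨c, rfl⟩ := Nat.exists_eq_add_of_lt hab
    clear hab
    induction c with
    | zero => have := hsm a (a + 0 + 1) hb (by omega); omega
    | succ c ih =>
      have := ih (by omega)
      have := hsm (a + c + 1) (a + (c + 1) + 1) hb (by omega)
      omega
  obtain ⟨z, hz⟩ := sorted_split L hLs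
  rw [List.filter_reverse] at hl
  have hz' : L = List.replicate z 0 ++ l.reverse := by rw [hl, List.reverse_reverse]; exact hz
  have hlen : s.length = z + l.length := by
    have := congrArg List.length hz'
    simpa [hL] using this
  have hLt : ∀ t (ht : t < s.length), L[t]'(by simpa [hL] using ht) = s.getD t 0 - t := by
    intro t ht; simp [hL]
  have hlow : ∀ t, t < z → s.getD t 0 = t := by
    intro t ht
    have h1 := hLt t (by omega)
    have h2 : L[t]'(by simp [hL]; omega) = 0 := by
      simp only [hz']
      rw [List.getElem_append_left (by simpa using ht)]
      simp
    have := hge t (by omega)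
    omega
  have hhigh : ∀ i : Fin l.length, degVec l i + z = s.getD (z + (l.length - 1 - i)) 0 := by
    intro i
    have hi := i.2
    have hlt : z + (l.length - 1 - i) < s.length := by omega
    have h1 := hLt _ hlt
    have h2 : L[z + (l.length - 1 - i)]'(by simp [hL]; omega) = l.get i := by
      simp only [hz']
      rw [List.getElem_append_right (by simp)]
      rw [List.getElem_reverse]
      simp only [List.length_replicate, List.get_eq_getElem]
      congr 1; omega
    have := hge _ hlt
    unfold degVec
    omega
  refine ⟨z, ?_, ?_⟩
  · intro d
    rw [← Finset.mem_sort (· ≤ ·), ← hs, List.mem_iff_getElem]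
    constructor
    · rintro ⟨t, ht, rfl⟩
      rw [← List.getD_eq_getElem _ 0 ht]
      by_cases htz : t < z
      · left; rw [hlow t htz]; exact htz
      · right
        refine ⟨⟨l.length - 1 - (t - z), by omega⟩, ?_⟩
        rw [hhigh]
        congr 1
        simp only
        omega
    · rintro (h | ⟨i, rfl⟩)
      · exact ⟨d, by omega, by rw [← List.getD_eq_getElem _ 0, hlow d h]⟩
      · have hi := i.2
        exact ⟨z + (l.length - 1 - i), by omega, by rw [← List.getD_eq_getElem _ 0, hhigh]⟩
  · intro i j hij
    have h1 := hhigh i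
    have h2 := hhigh j
    rw [hij, h2] at h1
    have hi := i.2
    have hj := j.2
    rcases lt_trichotomy i.1 j.1 with h | h | h
    · have := hsm (z + (l.length - 1 - j)) (z + (l.length - 1 - i)) (by omega) (by omega)
      omega
    · exact Fin.ext h
    · have := hsm (z + (l.length - 1 - i)) (z + (l.length - 1 - j)) (by omega) (by omega)
      omega

theorem degVec_injective (l : List ℕ) (h : l.Pairwise (· ≥ ·)) :
    Function.Injective (degVec l) := by
  have key : ∀ i j : Fin l.length, i < j → degVec l j < degVec l i := by
    intro i j hij
    have h1 : l.get i ≥ l.get j := List.pairwise_iff_get.mp h i j hij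
    have := j.2
    have : i.1 < j.1 := hij
    unfold degVec
    omega
  intro i j hij
  rcases lt_trichotomy i j with h | h | h
  · have := key i j h; omega
  · exact h
  · have := key j i h; omega

end WH

namespace WH
open Polynomial Matrix

theorem det_expand {A : Type} [CommRing A] {n B : ℕ} (g v : Fin n → ℕ → A) (p : Fin n → A[X])
    (hp : ∀ s, (p s).natDegree = s) (hm : ∀ s, (p s).Monic) :
    (Matrix.of fun i s : Fin n => ∑ m ∈ Finset.range B, g i m * (p s).eval (v i m)).det =
      ∑ r : Fin n → Fin B, (∏ i, g i (r i)) * (vandermonde fun i => v i (r i)).det := by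
  have h1 : (Matrix.of fun i s : Fin n => ∑ m ∈ Finset.range B, g i m * (p s).eval (v i m)) =
      fun i => ∑ m : Fin B, g i m • (fun s => (p s).eval (v i m)) := by
    ext i s
    rw [of_apply, Finset.sum_range, Finset.sum_apply]
    rfl
  rw [h1]
  have h2 := (Matrix.detRowAlternating (R := A) (n := Fin n)).toMultilinearMap.map_sum
    (fun (i : Fin n) (m : Fin B) => g i m • (fun s => (p s).eval (v i m)))
  refine h2.trans ?_
  refine Finset.sum_congr rfl fun r _ => ?_
  rw [MultilinearMap.map_smul_univ, smul_eq_mul]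
  congr 1
  rw [det_eval_matrixOfPolynomials_eq_det_vandermonde _ p hp hm]
  rfl

theorem exists_quot {A : Type} [CommRing A] [Nontrivial A] {n : ℕ} (u : Fin n → A)
    (p : Fin n → A[X]) :
    ∃ q, (Matrix.of fun i s : Fin n => (p s).eval (u i)).det = (vandermonde u).det * q := by
  set N : A[X] := ∏ i, (X - C (u i)) with hN
  have hmon : N.Monic := monic_prod_of_monic _ _ fun i _ => monic_X_sub_C _
  have hdeg : N.natDegree = n := by rw [hN]; simp
  refine ⟨(Matrix.of fun t s : Fin n => (p s %ₘ N).coeff t).det, ?_⟩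
  rw [← det_mul]
  congr 1
  ext i s
  rw [of_apply, mul_apply]
  have h0 : N.eval (u i) = 0 := by
    rw [hN, eval_prod]
    exact Finset.prod_eq_zero (Finset.mem_univ i) (by simp)
  have h1 : (p s).eval (u i) = (p s %ₘ N).eval (u i) := by
    conv_lhs => rw [← modByMonic_add_div (p s) N]
    simp [h0]
  have h2 : (p s %ₘ N).natDegree < n := by
    have := natDegree_modByMonic_lt (p s) hmon (by
      intro h; rw [h] at hdeg; simp at hdeg; have := i.2; omega)
    omega
  rw [h1, eval_eq_sum_range' h2, Finset.sum_range]
  refine Finset.sum_congr rfl fun t _ => ?_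
  rw [vandermonde_apply, of_apply, mul_comm]

theorem vand_scale {A : Type} [CommRing A] {n : ℕ} (t : A) (v : Fin n → A) :
    (vandermonde fun i => t * v i).det = (∏ i : Fin n, t ^ (i : ℕ)) * (vandermonde v).det := by
  rw [← det_mul_row]
  congr 1
  ext i j
  simp [vandermonde_apply, mul_pow]

theorem vand_append {A : Type} [CommRing A] {p q : ℕ} (x : Fin p → A) (y : Fin q → A) :
    (vandermonde (Fin.append x y)).det =
      (vandermonde x).det * (vandermonde y).det * ∏ i, ∏ j, (y j - x i) := by
  have h : ∀ (n : ℕ) (v : Fin n → A), (vandermonde v).det =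
      ∏ i : Fin n, ∏ j : Fin n, if i < j then v j - v i else 1 := by
    intro n v
    rw [det_vandermonde]
    refine Finset.prod_congr rfl fun i _ => ?_
    rw [← Finset.prod_filter]
    refine Finset.prod_congr ?_ fun _ _ => rfl
    ext j; simp
  rw [h, h, h, Fin.prod_univ_add]
  simp only [Fin.prod_univ_add, Fin.append_left, Fin.append_right, Finset.prod_mul_distrib]
  have e1 : ∀ (i : Fin p) (j : Fin q), Fin.castAdd q i < Fin.natAdd p j := by
    intro i j; rw [Fin.lt_def]; simp; omega
  have e2 : ∀ (i : Fin p) (j : Fin q), ¬ Fin.natAdd p j < Fin.castAdd q i := by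
    intro i j; exact not_lt.mpr (e1 i j).le
  have e3 : ∀ (i j : Fin p), Fin.castAdd q i < Fin.castAdd q j ↔ i < j := by
    intro i j; simp only [Fin.lt_def, Fin.val_castAdd]
  have e4 : ∀ (i j : Fin q), Fin.natAdd p i < Fin.natAdd p j ↔ i < j := by
    intro i j; simp only [Fin.lt_def, Fin.val_natAdd]; omega
  simp only [e1, e2, e3, e4, if_true, if_false, Finset.prod_const_one, one_mul]
  ring

/-- degree at most `d` with coefficient `a` at `d`. -/
def LC (p : ℚ[X]) (d : ℕ) (a : ℚ) : Prop := p.natDegree ≤ d ∧ p.coeff d = a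

theorem LC.mul {p q : ℚ[X]} {d e : ℕ} {a b : ℚ} (hp : LC p d a) (hq : LC q e b) :
    LC (p * q) (d + e) (a * b) :=
  ⟨natDegree_mul_le_of_le hp.1 hq.1, by
    rw [coeff_mul_add_eq_of_natDegree_le hp.1 hq.1, hp.2, hq.2]⟩

theorem LC.const (a : ℚ) : LC (C a) 0 a := ⟨by simp, by simp⟩

theorem LC.prod {ι : Type} (s : Finset ι) {p : ι → ℚ[X]} {d : ι → ℕ} {a : ι → ℚ}
    (h : ∀ i ∈ s, LC (p i) (d i) (a i)) : LC (∏ i ∈ s, p i) (∑ i ∈ s, d i) (∏ i ∈ s, a i) := by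
  classical
  induction s using Finset.induction_on with
  | empty => simpa using LC.const 1
  | insert i s hi ih =>
    rw [Finset.prod_insert hi, Finset.sum_insert hi, Finset.prod_insert hi]
    exact (h i (Finset.mem_insert_self _ _)).mul
      (ih fun j hj => h j (Finset.mem_insert_of_mem hj))

theorem LC.sum {ι : Type} (s : Finset ι) {p : ι → ℚ[X]} {d : ℕ} {a : ι → ℚ}
    (h : ∀ i ∈ s, LC (p i) d (a i)) : LC (∑ i ∈ s, p i) d (∑ i ∈ s, a i) :=
  ⟨natDegree_sum_le_of_forall_le _ _ fun i hi => (h i hi).1, by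
    rw [finsetSum_coeff]; exact Finset.sum_congr rfl fun i hi => (h i hi).2⟩

theorem LC.of_mul {D Q : ℚ[X]} {d j : ℕ} {α γ : ℚ} (hα : α ≠ 0) (hD : LC D d α)
    (h : LC (D * Q) (d + j) (α * γ)) : LC Q j γ := by
  have hD0 : D.coeff d ≠ 0 := by rw [hD.2]; exact hα
  have hdeg : D.natDegree = d := le_antisymm hD.1 (le_natDegree_of_ne_zero hD0)
  have hDne : D ≠ 0 := by rintro rfl; simp at hD0
  have hQ : Q.natDegree ≤ j := by
    by_cases hQ0 : Q = 0
    · simp [hQ0]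
    · have := h.1
      rw [natDegree_mul hDne hQ0] at this
      omega
  refine ⟨hQ, ?_⟩
  have := h.2
  rw [coeff_mul_add_eq_of_natDegree_le hD.1 hQ, hD.2] at this
  exact mul_left_cancel₀ hα this

theorem coeff_lin_pow (t : ℚ) (n i : ℕ) :
    ((1 + C t * X) ^ n : ℚ[X]).coeff i = t ^ i * (n.choose i : ℚ) := by
  have : ((1 + C t * X) ^ n : ℚ[X]) = ((1 + X) ^ n : ℚ[X]).comp (C t * X) := by simp
  rw [this, comp_C_mul_X_coeff, coeff_one_add_X_pow]; ring

/-- The binomial analogue: `Wr[(x+y)^{a_i}]`. -/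
theorem binom_gen {p : ℕ} (a : Fin p → ℕ) (B A : ℕ) (ha : ∀ i, a i < B)
    (hA : ∑ i, a i = A + ∑ i ∈ Finset.range p, i) (y : ℚ[X]) (hy : 1 + y ≠ 0) :
    ∑ r : Fin p → Fin B, (∏ i, C ((a i).choose (r i) : ℚ) * y ^ (r i : ℕ)) *
      (vandermonde fun i => C ((a i : ℚ) - (r i : ℕ))).det =
    (1 + y) ^ A * (vandermonde fun i => C (a i : ℚ)).det := by
  have h := det_expand (A := ℚ[X]) (B := B) (fun i m => C ((a i).choose m : ℚ) * y ^ m)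
    (fun i m => C ((a i : ℚ) - (m : ℕ))) (fun s : Fin p => descPochhammer ℚ[X] s)
    (fun s => descPochhammer_natDegree _ _) (fun s => monic_descPochhammer _ _)
  rw [← h]
  set E := (Matrix.of fun i s : Fin p => ∑ m ∈ Finset.range B, C ((a i).choose m : ℚ) * y ^ m *
    (descPochhammer ℚ[X] s).eval (C ((a i : ℚ) - (m : ℕ)))) with hE
  have hent : ∀ i s : Fin p, (1 + y) ^ (s : ℕ) * E i s =
      (1 + y) ^ (a i) * (descPochhammer ℚ[X] s).eval (C (a i : ℚ)) := by
    intro i s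
    have e0 : ∀ n : ℕ, (C (n : ℚ) : ℚ[X]) = (n : ℚ[X]) := fun n => by simp
    have e1 : ∀ m ∈ Finset.range B, C ((a i).choose m : ℚ) * y ^ m *
        (descPochhammer ℚ[X] s).eval (C ((a i : ℚ) - (m : ℕ))) =
        ((a i).descFactorial s : ℚ[X]) * (y ^ m * ((a i - s).choose m : ℚ[X])) := by
      intro m _
      by_cases hm : m ≤ a i
      · rw [← Nat.cast_sub hm, e0, e0, descPochhammer_eval_eq_descFactorial]
        have key : (a i).choose m * (a i - m).descFactorial s =
            (a i).descFactorial s * (a i - s).choose m := by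
          apply Nat.eq_of_mul_eq_mul_left m.factorial_pos
          have k1 := Nat.descFactorial_eq_factorial_mul_choose (a i) m
          have k2 := Nat.descFactorial_eq_factorial_mul_choose (a i - s) m
          by_cases hs : s ≤ a i
          · have : (a i).descFactorial m * (a i - m).descFactorial s =
              (a i).descFactorial s * (a i - s).descFactorial m := by
              have d1 := Nat.descFactorial_mul_descFactorial (n := a i) (Nat.le_add_right m s)
              have d2 := Nat.descFactorial_mul_descFactorial (n := a i) (Nat.le_add_left s m)
              rw [Nat.add_sub_cancel_left] at d1
              rw [Nat.add_sub_cancel] at d2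
              linarith
            rw [k1, k2] at this
            linarith
          · rw [Nat.descFactorial_eq_zero_iff_lt.mpr (show a i - m < s by omega),
              Nat.descFactorial_eq_zero_iff_lt.mpr (show a i < s by omega)]
            simp
        have key' : ((a i).choose m : ℚ[X]) * ((a i - m).descFactorial s : ℚ[X]) =
            ((a i).descFactorial s : ℚ[X]) * ((a i - s).choose m : ℚ[X]) := by exact_mod_cast key
        linear_combination y ^ m * key'
      · rw [Nat.choose_eq_zero_of_lt (show a i < m by omega),
          Nat.choose_eq_zero_of_lt (show a i - s < m by omega)]
        simp
    rw [hE, of_apply, Finset.sum_congr rfl e1, ← Finset.mul_sum, e0,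
      descPochhammer_eval_eq_descFactorial]
    by_cases hs : s ≤ a i
    · have e2 : ∑ m ∈ Finset.range B, y ^ m * ((a i - s).choose m : ℚ[X]) = (1 + y) ^ (a i - s) := by
        rw [add_comm 1 y, add_pow]
        symm
        refine Finset.sum_subset_zero_on_sdiff ?_ ?_ ?_
        · intro m hm
          have := ha i
          simp at hm ⊢; omega
        · intro m hm
          simp at hm
          rw [Nat.choose_eq_zero_of_lt (by omega)]; simp
        · intro m _; simp
      rw [e2]
      have : (1 + y) ^ (a i) = (1 + y) ^ (s : ℕ) * (1 + y) ^ (a i - s) := by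
        rw [← pow_add]; congr 1; omega
      rw [this]; ring
    · rw [Nat.descFactorial_eq_zero_iff_lt.mpr (show a i < s by omega)]; simp
  have hdet : (∏ s : Fin p, (1 + y) ^ (s : ℕ)) * E.det =
      (∏ i, (1 + y) ^ (a i)) * (vandermonde fun i => C (a i : ℚ)).det := by
    rw [det_eval_matrixOfPolynomials_eq_det_vandermonde _
      (fun s : Fin p => descPochhammer ℚ[X] s)
      (fun s => descPochhammer_natDegree _ _) (fun s => monic_descPochhammer _ _),
      ← det_mul_row, ← det_mul_column]
    congr 1
    ext1 i s
    exact hent i s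
  rw [Finset.prod_pow_eq_pow_sum, Finset.prod_pow_eq_pow_sum, hA,
    Fin.sum_univ_eq_sum_range (fun i => i), pow_add] at hdet
  apply mul_left_cancel₀ (pow_ne_zero (∑ i ∈ Finset.range p, i) hy)
  rw [hdet]; ring

end WH

namespace WH
open Polynomial Matrix

/-- Reduced weights on the quotient. -/
noncomputable def gw {R : Type} [CommRing R] [Algebra ℚ R] (c u : R) (m : ℕ) : R :=
  algebraMap ℚ R ((-1 / 2) ^ m / (m.factorial : ℚ)) *
    ∏ s ∈ Finset.range m, ((u - 2 * (s : R)) * (u - c - 2 * (s : R)))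

/-- Reduced nodes. -/
def nodes {R : Type} [CommRing R] {p q : ℕ} (c : R) (a : Fin p → ℕ) (b : Fin q → ℕ) :
    Fin (p + q) → R :=
  Fin.append (fun i => 2 * (a i : R)) (fun j => c + 2 * (b j : R))

theorem map_gw {R S : Type} [CommRing R] [Algebra ℚ R] [CommRing S] [Algebra ℚ S]
    (φ : R →+* S) (c u : R) (m : ℕ) : φ (gw c u m) = gw (φ c) (φ u) m := by
  unfold gw
  simp only [map_mul, map_prod, map_sub, map_natCast, map_ofNat]
  congr 1
  exact congrFun (congrArg DFunLike.coe (Subsingleton.elim (φ.comp (algebraMap ℚ R)) (algebraMap ℚ S))) _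

theorem map_nodes {R S : Type} [CommRing R] [CommRing S] {p q : ℕ}
    (φ : R →+* S) (c : R) (a : Fin p → ℕ) (b : Fin q → ℕ) (i : Fin (p + q)) :
    φ (nodes c a b i) = nodes (φ c) a b i := by
  unfold nodes
  induction i using Fin.addCases <;> simp [map_ofNat]

theorem map_vand {R S : Type} [CommRing R] [CommRing S] {n : ℕ}
    (φ : R →+* S) (v : Fin n → R) : φ (vandermonde v).det = (vandermonde fun i => φ (v i)).det := by
  rw [RingHom.map_det]
  congr 1
  ext i j
  simp [vandermonde_apply]

theorem two_prod (a m : ℕ) : ((-1 / 2 : ℚ) ^ m / (m.factorial : ℚ)) *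
    ∏ s ∈ Finset.range m, ((2 * (a : ℚ) - 2 * (s : ℚ)) * (-2)) = (a.choose m : ℚ) * 2 ^ m := by
  have h1 : ∏ s ∈ Finset.range m, ((2 * (a : ℚ) - 2 * (s : ℚ)) * (-2)) =
      (-4) ^ m * ∏ s ∈ Finset.range m, ((a : ℚ) - (s : ℚ)) := by
    rw [← Finset.card_range m, ← Finset.prod_const, Finset.card_range, ← Finset.prod_mul_distrib]
    refine Finset.prod_congr rfl fun s _ => by ring
  rw [h1, prod_eq_descFactorial, Nat.descFactorial_eq_factorial_mul_choose]
  have h5 : (m.factorial : ℚ) ≠ 0 := by exact_mod_cast m.factorial_ne_zero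
  have h6 : (-1 / 2 : ℚ) ^ m * (-4) ^ m = 2 ^ m := by rw [← mul_pow]; norm_num
  push_cast
  field_simp
  linear_combination (a.choose m : ℚ) * h6

theorem C_two : (C 2 : ℚ[X]) = 2 := map_ofNat C 2

theorem LC_lin (t d : ℚ) : LC (C t * X + C d) 1 t :=
  ⟨natDegree_linear_le, by simp⟩

theorem LC_gw_left (c0 : ℚ) (a m : ℕ) :
    LC (gw (2 * X + C c0) (2 * (a : ℚ[X])) m) m (2 ^ m * (a.choose m : ℚ)) := by
  unfold gw
  have h := (LC.const ((-1 / 2) ^ m / (m.factorial : ℚ))).mul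
    (LC.prod (Finset.range m) (p := fun s => (2 * (a : ℚ[X]) - 2 * (s : ℚ[X])) *
      (2 * (a : ℚ[X]) - (2 * X + C c0) - 2 * (s : ℚ[X]))) (d := fun _ => 0 + 1)
      (a := fun s => (2 * (a : ℚ) - 2 * (s : ℚ)) * (-2)) (fun s _ => by
        refine LC.mul ?_ ?_
        · have := LC.const (2 * (a : ℚ) - 2 * (s : ℚ))
          simpa [C_two] using this
        · have := LC_lin (-2) (2 * (a : ℚ) - c0 - 2 * (s : ℚ))
          convert this using 1
          simp [C_two]
          ring))
  rw [two_prod] at h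
  simpa [mul_comm] using h

theorem LC_gw_right (c0 : ℚ) (b m : ℕ) :
    LC (gw (2 * X + C c0) (2 * X + C c0 + 2 * (b : ℚ[X])) m) m ((-2) ^ m * (b.choose m : ℚ)) := by
  unfold gw
  have h := (LC.const ((-1 / 2) ^ m / (m.factorial : ℚ))).mul
    (LC.prod (Finset.range m) (p := fun s => (2 * X + C c0 + 2 * (b : ℚ[X]) - 2 * (s : ℚ[X])) *
      (2 * X + C c0 + 2 * (b : ℚ[X]) - (2 * X + C c0) - 2 * (s : ℚ[X]))) (d := fun _ => 1 + 0)
      (a := fun s => (-1) * ((2 * (b : ℚ) - 2 * (s : ℚ)) * (-2))) (fun s _ => by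
        have h1 := LC_lin 2 (c0 + 2 * (b : ℚ) - 2 * (s : ℚ))
        have h2 := LC.const (2 * (b : ℚ) - 2 * (s : ℚ))
        convert h1.mul h2 using 1
        · simp only [map_add, map_sub, map_mul, C_two, map_natCast]
          ring
        · ring))
  rw [Finset.prod_mul_distrib (f := fun _ => (-1 : ℚ)), Finset.prod_const, Finset.card_range,
    mul_left_comm, two_prod] at h
  have h7 : (0 + ∑ i ∈ Finset.range m, (1 + 0)) = m := by simp
  rw [h7] at h
  have h8 : (-2 : ℚ) ^ m * (b.choose m : ℚ) = (-1) ^ m * ((b.choose m : ℚ) * 2 ^ m) := by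
    rw [show (-2 : ℚ) = (-1) * 2 by norm_num, mul_pow]; ring
  rw [h8]
  exact h

theorem LC_vand {p q : ℕ} (c0 : ℚ) (x : Fin p → ℚ) (y : Fin q → ℚ) :
    LC (vandermonde (Fin.append (fun i => C (x i)) (fun j => 2 * X + C c0 + C (y j)))).det (p * q)
      ((vandermonde x).det * (vandermonde y).det * 2 ^ (p * q)) := by
  rw [vand_append]
  have h1 : LC (vandermonde fun i => C (x i)).det 0 (vandermonde x).det := by
    rw [← map_vand (C : ℚ →+* ℚ[X])]; exact LC.const _
  have h2 : LC (vandermonde fun j => 2 * X + C c0 + C (y j)).det 0 (vandermonde y).det := by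
    have : (vandermonde fun j => 2 * X + C c0 + C (y j)).det = C (vandermonde y).det := by
      rw [map_vand (C : ℚ →+* ℚ[X]), ← det_vandermonde_add (fun j => C (y j)) (2 * X + C c0)]
      congr 2; ext j; ring
    rw [this]; exact LC.const _
  have h3 : LC (∏ i, ∏ j, (2 * X + C c0 + C (y j) - C (x i))) (p * q) (2 ^ (p * q)) := by
    have := LC.prod (Finset.univ : Finset (Fin p)) (fun i _ =>
      LC.prod (Finset.univ : Finset (Fin q)) (fun j _ => LC_lin 2 (c0 + y j - x i)))
    convert this using 1
    · refine Finset.prod_congr rfl fun i _ => Finset.prod_congr rfl fun j _ => ?_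
      simp [C_two]; ring
    · simp
    · simp [pow_mul']
  have := (h1.mul h2).mul h3
  simpa using this

end WH

namespace WH
open Polynomial Matrix

theorem lead_sum {p q : ℕ} (a : Fin p → ℕ) (b : Fin q → ℕ) (B A1 A2 : ℕ)
    (ha : ∀ i, a i < B) (hb : ∀ i, b i < B)
    (hA1 : ∑ i, a i = A1 + ∑ i ∈ Finset.range p, i)
    (hA2 : ∑ i, b i = A2 + ∑ i ∈ Finset.range q, i) (j : ℕ) :
    (∑ r : (Fin p → Fin B) × (Fin q → Fin B),
      if (∑ i, (r.1 i : ℕ)) + ∑ i, (r.2 i : ℕ) = j then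
        ((∏ i, 2 ^ (r.1 i : ℕ) * ((a i).choose (r.1 i) : ℚ)) *
          ∏ i, (-2) ^ (r.2 i : ℕ) * ((b i).choose (r.2 i) : ℚ)) *
        ((vandermonde fun i => 2 * ((a i : ℚ) - (r.1 i : ℕ))).det *
          (vandermonde fun i => 2 * ((b i : ℚ) - (r.2 i : ℕ))).det * 2 ^ (p * q)) else 0) =
    ((vandermonde fun i => 2 * (a i : ℚ)).det * (vandermonde fun i => 2 * (b i : ℚ)).det *
      2 ^ (p * q)) *
      (2 ^ j * ∑ l ∈ Finset.range (j + 1),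
        (-1 : ℚ) ^ l * (A1.choose (j - l) : ℚ) * (A2.choose l : ℚ)) := by
  have hne : ∀ t : ℚ, (1 + C t * X : ℚ[X]) ≠ 0 := fun t h => by
    have := congrArg (fun f => f.coeff 0) h
    simp at this
  have g1 := binom_gen a B A1 ha hA1 (C 2 * X) (hne 2)
  have g2 := binom_gen b B A2 hb hA2 (C (-2) * X) (hne (-2))
  have term : ∀ {n : ℕ} (t : ℚ) (x : Fin n → ℕ) (r : Fin n → Fin B),
      (∏ i, C ((x i).choose (r i) : ℚ) * (C t * X) ^ (r i : ℕ)) *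
      (vandermonde fun i => C ((x i : ℚ) - (r i : ℕ))).det =
      C ((∏ i, t ^ (r i : ℕ) * ((x i).choose (r i) : ℚ)) *
        (vandermonde fun i => ((x i : ℚ) - (r i : ℕ))).det) * X ^ (∑ i, (r i : ℕ)) := by
    intro n t x r
    have h : (∏ i, C ((x i).choose (r i) : ℚ) * (C t * X) ^ (r i : ℕ)) =
        C (∏ i, t ^ (r i : ℕ) * ((x i).choose (r i) : ℚ)) * X ^ (∑ i, (r i : ℕ)) := by
      rw [map_prod, ← Finset.prod_pow_eq_pow_sum, ← Finset.prod_mul_distrib]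
      refine Finset.prod_congr rfl fun i _ => ?_
      rw [mul_pow, C_mul, C_pow]; ring
    rw [← map_vand (C : ℚ →+* ℚ[X]), h, C_mul]; ring
  have key := congrArg (fun f => f.coeff j) (congrArg₂ (· * ·) g1 g2)
  simp only [term] at key
  rw [Finset.sum_mul_sum, ← Fintype.sum_prod_type'
    (f := fun (r1 : Fin p → Fin B) (r2 : Fin q → Fin B) => _ * _), finsetSum_coeff] at key
  simp_rw [vand_scale]
  have hL : ∀ r : (Fin p → Fin B) × (Fin q → Fin B),
      (if (∑ i, (r.1 i : ℕ)) + ∑ i, (r.2 i : ℕ) = j then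
        ((∏ i, 2 ^ (r.1 i : ℕ) * ((a i).choose (r.1 i) : ℚ)) *
          ∏ i, (-2) ^ (r.2 i : ℕ) * ((b i).choose (r.2 i) : ℚ)) *
        ((∏ i : Fin p, (2 : ℚ) ^ (i : ℕ)) * (vandermonde fun i => ((a i : ℚ) - (r.1 i : ℕ))).det *
          ((∏ i : Fin q, (2 : ℚ) ^ (i : ℕ)) * (vandermonde fun i => ((b i : ℚ) - (r.2 i : ℕ))).det) *
          2 ^ (p * q)) else 0) =
      ((∏ i : Fin p, (2 : ℚ) ^ (i : ℕ)) * (∏ i : Fin q, (2 : ℚ) ^ (i : ℕ)) * 2 ^ (p * q)) *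
      (C ((∏ i, 2 ^ (r.1 i : ℕ) * ((a i).choose (r.1 i) : ℚ)) *
        (vandermonde fun i => ((a i : ℚ) - (r.1 i : ℕ))).det) * X ^ (∑ i, (r.1 i : ℕ)) *
      (C ((∏ i, (-2) ^ (r.2 i : ℕ) * ((b i).choose (r.2 i) : ℚ)) *
        (vandermonde fun i => ((b i : ℚ) - (r.2 i : ℕ))).det) * X ^ (∑ i, (r.2 i : ℕ)))).coeff j := by
    intro r
    rw [mul_mul_mul_comm (C _), ← C_mul, ← pow_add, coeff_C_mul, coeff_X_pow]
    by_cases hr : (∑ i, (r.1 i : ℕ)) + ∑ i, (r.2 i : ℕ) = j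
    · rw [if_pos hr, if_pos hr.symm]; ring
    · rw [if_neg hr, if_neg (Ne.symm hr)]; ring
  rw [Finset.sum_congr rfl fun r _ => hL r, ← Finset.mul_sum, key]
  rw [← map_vand (C : ℚ →+* ℚ[X]), ← map_vand (C : ℚ →+* ℚ[X]), mul_mul_mul_comm ((1 + C 2 * X) ^ A1),
    ← C_mul, coeff_mul_C, mul_comm ((1 + C 2 * X) ^ A1), coeff_mul,
    Finset.Nat.sum_antidiagonal_eq_sum_range_succ_mk]
  simp only [coeff_lin_pow]
  have hS : ∑ x ∈ Finset.range j.succ, (-2 : ℚ) ^ x * (A2.choose x : ℚ) *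
      (2 ^ (j - x) * (A1.choose (j - x) : ℚ)) = 2 ^ j * ∑ l ∈ Finset.range (j + 1),
        (-1 : ℚ) ^ l * (A1.choose (j - l) : ℚ) * (A2.choose l : ℚ) := by
    rw [Finset.mul_sum]
    refine Finset.sum_congr rfl fun l hl => ?_
    have : l ≤ j := Nat.lt_succ_iff.mp (Finset.mem_range.mp hl)
    obtain ⟨d, rfl⟩ := Nat.exists_eq_add_of_le this
    rw [show (-2 : ℚ) = (-1) * 2 by norm_num, mul_pow, Nat.add_sub_cancel_left, pow_add]; ring
  rw [hS]; ring

theorem main_Q {p q : ℕ} (a : Fin p → ℕ) (b : Fin q → ℕ) (B A1 A2 : ℕ)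
    (ha : ∀ i, a i < B) (hb : ∀ i, b i < B) (hai : Function.Injective a) (hbi : Function.Injective b)
    (hA1 : ∑ i, a i = A1 + ∑ i ∈ Finset.range p, i)
    (hA2 : ∑ i, b i = A2 + ∑ i ∈ Finset.range q, i) (c0 : ℚ) :
    ∃ Q : ℚ[X][X], (∀ k0 z0 : ℚ,
      (Matrix.of fun i s : Fin (p + q) => ∑ m ∈ Finset.range B,
        (z0 ^ m * gw (2 * k0 + c0) (nodes (2 * k0 + c0) a b i) m) *
          (nodes (2 * k0 + c0) a b i - 2 * (m : ℚ)) ^ (s : ℕ)).det =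
      (vandermonde (nodes (2 * k0 + c0) a b)).det * Q.eval₂ (evalRingHom k0) z0) ∧
      ∀ j, LC (Q.coeff j) j (2 ^ j * ∑ l ∈ Finset.range (j + 1),
        (-1 : ℚ) ^ l * (A1.choose (j - l) : ℚ) * (A2.choose l : ℚ)) := by
  set c : ℚ[X] := 2 * X + C c0 with hc
  set u : Fin (p + q) → ℚ[X] := nodes c a b with hu
  set g : ℚ[X][X] → ℕ → ℚ[X][X] := fun y m => X ^ m * gw (C c) y m with hg
  set pol : Fin (p + q) → ℚ[X][X][X] := fun s => ∑ m ∈ Finset.range B,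
    (C (X ^ m) * gw (C (C c)) X m) * (X - 2 * (m : ℚ[X][X][X])) ^ (s : ℕ) with hpol
  obtain ⟨Q, hQ⟩ := exists_quot (fun i => C (u i)) pol
  have hpe : ∀ i s, (pol s).eval (C (u i)) = ∑ m ∈ Finset.range B,
      (X ^ m * C (gw c (u i) m)) * (C (u i - 2 * (m : ℚ[X]))) ^ (s : ℕ) := by
    intro i s
    rw [hpol]
    simp only [eval_finsetSum]
    refine Finset.sum_congr rfl fun m _ => ?_
    have := map_gw (evalRingHom (C (u i))) (C (C c)) X m
    simp only [coe_evalRingHom, eval_C, eval_X] at this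
    rw [eval_mul, eval_mul, this, map_gw, eval_C, eval_pow, eval_sub, eval_mul, eval_X, eval_natCast,
      eval_ofNat, C_sub, C_mul, map_natCast, map_ofNat]
  simp_rw [hpe] at hQ
  refine ⟨Q, ?_, ?_⟩
  · intro k0 z0
    have := congrArg (eval₂RingHom (evalRingHom k0) z0) hQ
    rw [map_mul, map_vand, RingHom.map_det] at this
    have hck : eval₂RingHom (evalRingHom k0) z0 (C c) = 2 * k0 + c0 := by
      rw [coe_eval₂RingHom, eval₂_C]; simp [hc]
    have hX : eval₂RingHom (evalRingHom k0) z0 X = z0 := by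
      rw [coe_eval₂RingHom, eval₂_X]
    have hn : ∀ i, eval₂RingHom (evalRingHom k0) z0 (C (u i)) = nodes (2 * k0 + c0) a b i := by
      intro i
      rw [hu, map_nodes, map_nodes, hck]
    have hm : (eval₂RingHom (evalRingHom k0) z0).mapMatrix
        (of fun i s : Fin (p + q) => ∑ m ∈ Finset.range B, X ^ m * C (gw c (u i) m) * C (u i - 2 * (m : ℚ[X])) ^ (s : ℕ)) =
        (Matrix.of fun i s : Fin (p + q) => ∑ m ∈ Finset.range B,
        (z0 ^ m * gw (2 * k0 + c0) (nodes (2 * k0 + c0) a b i) m) *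
          (nodes (2 * k0 + c0) a b i - 2 * (m : ℚ)) ^ (s : ℕ)) := by
      ext i s
      rw [RingHom.mapMatrix_apply, map_apply, of_apply, of_apply, map_sum]
      refine Finset.sum_congr rfl fun m _ => ?_
      rw [map_mul, map_mul, map_pow, map_pow, hX, map_gw, map_gw, hck, hn, C_sub, map_sub, hn,
        C_mul, map_natCast, map_ofNat, map_mul, map_natCast, map_ofNat]
    rw [hm] at this
    simp_rw [hn] at this
    exact this
  · intro j
    have hex := det_expand (A := ℚ[X][X]) (B := B) (fun i m => X ^ m * C (gw c (u i) m))
      (fun i m => C (u i - 2 * (m : ℚ[X]))) (fun s : Fin (p + q) => X ^ (s : ℕ))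
      (fun s => natDegree_X_pow _) (fun s => monic_X_pow _)
    simp only [eval_pow, eval_X] at hex
    rw [hQ, ← map_vand (C : ℚ[X] →+* ℚ[X][X])] at hex
    have h1 := congrArg (fun f => f.coeff j) hex
    simp only [coeff_C_mul, finsetSum_coeff] at h1
    rw [← (Fin.appendEquiv p q).sum_comp] at h1
    have h2 : (vandermonde u).det * Q.coeff j = ∑ r : (Fin p → Fin B) × (Fin q → Fin B),
      if (∑ i, (r.1 i : ℕ)) + ∑ i, (r.2 i : ℕ) = j then
        ((∏ i, gw c (2 * (a i : ℚ[X])) (r.1 i)) * ∏ i, gw c (c + 2 * (b i : ℚ[X])) (r.2 i)) *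
        (vandermonde (Fin.append (fun i => C (2 * ((a i : ℚ) - (r.1 i : ℕ))))
          (fun i => 2 * X + C c0 + C (2 * ((b i : ℚ) - (r.2 i : ℕ)))))).det else 0 := by
      rw [h1]
      refine Finset.sum_congr rfl fun r _ => ?_
      rw [← map_vand (C : ℚ[X] →+* ℚ[X][X]), Finset.prod_mul_distrib, Finset.prod_pow_eq_pow_sum,
        ← map_prod, mul_assoc, ← C_mul, mul_comm, coeff_C_mul, coeff_X_pow,
        Fin.sum_univ_add, Fin.prod_univ_add]
      simp only [Fin.appendEquiv, Equiv.coe_fn_mk, Fin.append_left, Fin.append_right, hu, nodes]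
      have hv : (vandermonde fun i : Fin (p + q) =>
          Fin.append (fun i => 2 * (a i : ℚ[X])) (fun j => c + 2 * (b j : ℚ[X])) i -
            2 * (((Fin.append r.1 r.2 i : Fin B) : ℕ) : ℚ[X])) =
          vandermonde (Fin.append (fun i => C (2 * ((a i : ℚ) - (r.1 i : ℕ))))
          (fun i => 2 * X + C c0 + C (2 * ((b i : ℚ) - (r.2 i : ℕ))))) := by
        congr 1
        ext i : 1
        induction i using Fin.addCases <;> simp [C_two, hc] <;> ring
      rw [hv]
      by_cases hr : (∑ i, (r.1 i : ℕ)) + ∑ i, (r.2 i : ℕ) = j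
      · rw [if_pos hr, if_pos hr.symm]; ring
      · rw [if_neg hr, if_neg (Ne.symm hr)]; ring
    have hLC := LC.sum (Finset.univ : Finset ((Fin p → Fin B) × (Fin q → Fin B)))
      (d := p * q + j) (p := fun r => if (∑ i, (r.1 i : ℕ)) + ∑ i, (r.2 i : ℕ) = j then
        ((∏ i, gw c (2 * (a i : ℚ[X])) (r.1 i)) * ∏ i, gw c (c + 2 * (b i : ℚ[X])) (r.2 i)) *
        (vandermonde (Fin.append (fun i => C (2 * ((a i : ℚ) - (r.1 i : ℕ))))
          (fun i => 2 * X + C c0 + C (2 * ((b i : ℚ) - (r.2 i : ℕ)))))).det else 0)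
      (fun r _ => by
        show LC _ _ (if (∑ i, (r.1 i : ℕ)) + ∑ i, (r.2 i : ℕ) = j then
        ((∏ i, 2 ^ (r.1 i : ℕ) * ((a i).choose (r.1 i) : ℚ)) *
          ∏ i, (-2) ^ (r.2 i : ℕ) * ((b i).choose (r.2 i) : ℚ)) *
        ((vandermonde fun i => 2 * ((a i : ℚ) - (r.1 i : ℕ))).det *
          (vandermonde fun i => 2 * ((b i : ℚ) - (r.2 i : ℕ))).det * 2 ^ (p * q)) else 0)
        split_ifs with hr
        · have := ((LC.prod Finset.univ fun i _ => LC_gw_left c0 (a i) (r.1 i)).mul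
            (LC.prod Finset.univ fun i _ => LC_gw_right c0 (b i) (r.2 i))).mul
            (LC_vand c0 (fun i => 2 * ((a i : ℚ) - (r.1 i : ℕ)))
              (fun i => 2 * ((b i : ℚ) - (r.2 i : ℕ))))
          rw [hr, add_comm j] at this
          exact this
        · exact ⟨by simp, by simp⟩)
    rw [← h2, lead_sum a b B A1 A2 ha hb hA1 hA2] at hLC
    refine LC.of_mul ?_ ?_ hLC
    · refine mul_ne_zero (mul_ne_zero ?_ ?_) (by positivity)
      · rw [det_vandermonde_ne_zero_iff]
        intro i i' h; apply hai; simpa using h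
      · rw [det_vandermonde_ne_zero_iff]
        intro i i' h; apply hbi; simpa using h
    · have := LC_vand c0 (fun i => 2 * (a i : ℚ)) (fun i => 2 * (b i : ℚ))
      convert this using 3
      rw [hu]; unfold nodes
      congr 1 <;> ext i : 1 <;> simp [C_two, hc]

end WH

namespace WH
open Polynomial Matrix

theorem exists_equiv {α β : Type} (f : α → ℕ) (g : β → ℕ) (hf : Function.Injective f)
    (hg : Function.Injective g) (h : Set.range f = Set.range g) :
    ∃ e : β ≃ α, ∀ i, f (e i) = g i := by
  refine ⟨(Equiv.ofInjective g hg).trans ((Equiv.setCongr h.symm).trans (Equiv.ofInjective f hf).symm), fun i => ?_⟩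
  simp only [Equiv.trans_apply]
  rw [Equiv.apply_ofInjective_symm hf]
  rfl

theorem wt_zero (z : ℚ) (n m : ℕ) (h : n < 2 * m) : wt z (n : ℚ) m = 0 := by
  unfold wt
  rw [Finset.prod_eq_zero (Finset.mem_range.mpr h) (sub_self _), mul_zero]

theorem wt_at_zero (z u : ℚ) : wt z u 0 = 1 := by
  simp [wt]

theorem prod_shift (f : ℕ → ℚ) (m L : ℕ) :
    (∏ s ∈ Finset.range m, f s) * ∏ t ∈ Finset.range L, f (m + t) =
    (∏ t ∈ Finset.range L, f t) * ∏ s ∈ Finset.range m, f (L + s) := by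
  rw [← Finset.prod_range_add, ← Finset.prod_range_add, add_comm]

theorem wt_shift (z0 u : ℚ) (z m : ℕ) :
    wt z0 u m * ∏ b : Fin z, (u - 2 * (m : ℚ) - ((b : ℕ) : ℚ)) =
    (∏ b : Fin z, (u - ((b : ℕ) : ℚ))) * wt z0 (u - z) m := by
  unfold wt
  rw [Fin.prod_univ_eq_prod_range (fun t => u - 2 * (m : ℚ) - (t : ℚ)),
    Fin.prod_univ_eq_prod_range (fun t => u - (t : ℚ))]
  have h := prod_shift (fun s => u - (s : ℚ)) (2 * m) z
  simp only [Nat.cast_add, Nat.cast_mul, Nat.cast_ofNat, ← sub_sub] at h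
  linear_combination (z0 ^ m * ((-1 / 2) ^ m / (m.factorial : ℚ))) * h

theorem prod_double (f : ℕ → ℚ) (m : ℕ) :
    ∏ s ∈ Finset.range (2 * m), f s = (∏ s ∈ Finset.range m, f (2 * s)) *
      ∏ s ∈ Finset.range m, f (2 * s + 1) := by
  induction m with
  | zero => simp
  | succ m ih =>
    rw [show 2 * (m + 1) = 2 * m + 1 + 1 by ring, Finset.prod_range_succ, Finset.prod_range_succ, ih,
      Finset.prod_range_succ, Finset.prod_range_succ]
    ring

theorem wt_two (z0 u c : ℚ) (q K m : ℕ) (hc : c = 2 * K + 1 - 2 * q) :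
    wt z0 u m * ((∏ b : Fin q, (u - 2 * (m : ℚ) - ((2 * (b : ℕ) : ℕ) : ℚ))) *
      ∏ b : Fin K, (u - 2 * (m : ℚ) - ((2 * (b : ℕ) + 1 : ℕ) : ℚ))) =
    ((∏ b : Fin q, (u - ((2 * (b : ℕ) : ℕ) : ℚ))) *
      ∏ b : Fin K, (u - ((2 * (b : ℕ) + 1 : ℕ) : ℚ))) * (z0 ^ m * gw c (u - 2 * q) m) := by
  unfold wt gw
  rw [Fin.prod_univ_eq_prod_range (fun t => u - 2 * (m : ℚ) - ((2 * t : ℕ) : ℚ)),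
    Fin.prod_univ_eq_prod_range (fun t => u - 2 * (m : ℚ) - ((2 * t + 1 : ℕ) : ℚ)),
    Fin.prod_univ_eq_prod_range (fun t => u - ((2 * t : ℕ) : ℚ)),
    Fin.prod_univ_eq_prod_range (fun t => u - ((2 * t + 1 : ℕ) : ℚ)),
    prod_double, Finset.prod_mul_distrib]
  have h1 := prod_shift (fun s => u - ((2 * s : ℕ) : ℚ)) m q
  have h2 := prod_shift (fun s => u - ((2 * s + 1 : ℕ) : ℚ)) m K
  have e1 : ∀ t : ℕ, u - ((2 * (m + t) : ℕ) : ℚ) = u - 2 * (m : ℚ) - ((2 * t : ℕ) : ℚ) := by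
    intro t; push_cast; ring
  have e2 : ∀ t : ℕ, u - ((2 * (m + t) + 1 : ℕ) : ℚ) = u - 2 * (m : ℚ) - ((2 * t + 1 : ℕ) : ℚ) := by
    intro t; push_cast; ring
  have e3 : ∀ t : ℕ, u - ((2 * (q + t) : ℕ) : ℚ) = u - 2 * q - 2 * (t : ℚ) := by
    intro t; push_cast; ring
  have e4 : ∀ t : ℕ, u - ((2 * (K + t) + 1 : ℕ) : ℚ) = u - 2 * q - c - 2 * (t : ℚ) := by
    intro t; rw [hc]; push_cast; ring
  simp only [e1, e2, e3, e4] at h1 h2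
  have h3 := congrArg₂ (· * ·) h1 h2
  simp only [Algebra.algebraMap_self, RingHom.id_apply]
  linear_combination (z0 ^ m * ((-1 / 2) ^ m / (m.factorial : ℚ))) * h3

theorem gw_nodes_zero {p q : ℕ} (c : ℚ) (a : Fin p → ℕ) (b : Fin q → ℕ) (B : ℕ)
    (ha : ∀ i, a i < B) (hb : ∀ i, b i < B) (i : Fin (p + q)) (m : ℕ) (hm : B ≤ m) :
    gw c (nodes c a b i) m = 0 := by
  unfold gw
  induction i using Fin.addCases with
  | left i =>
    rw [Finset.prod_eq_zero (Finset.mem_range.mpr ((ha i).trans_le hm)), mul_zero]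
    simp [nodes]
  | right i =>
    rw [Finset.prod_eq_zero (Finset.mem_range.mpr ((hb i).trans_le hm)), mul_zero]
    simp [nodes]

theorem coeff_of_eval (H q : ℚ[X]) (N j : ℕ) (hj : 2 * j ≤ N)
    (h : ∀ x : ℚ, x ≠ 0 → H.eval x = x ^ N * q.eval (x⁻¹ ^ 2)) : H.coeff (N - 2 * j) = q.coeff j := by
  set d := q.natDegree + N with hd
  have h1 : X ^ (2 * d) * H = ∑ i ∈ Finset.range (q.natDegree + 1), C (q.coeff i) * X ^ (N + 2 * d - 2 * i) := by
    refine eq_of_infinite_eval_eq _ _ (Set.Infinite.mono (s := {x | x ≠ 0}) ?_ ?_)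
    · intro x hx
      have hx' : x ≠ 0 := hx
      rw [Set.mem_ofPred_eq, eval_mul, h x hx', eval_finsetSum, eval_eq_sum_range (p := q), Finset.mul_sum,
        Finset.mul_sum]
      refine Finset.sum_congr rfl fun i hi => ?_
      have hi' := Finset.mem_range.mp hi
      simp only [eval_pow, eval_X, eval_mul, eval_C]
      have : x ^ (N + 2 * d) = x ^ (N + 2 * d - 2 * i) * x ^ (2 * i) := by
        rw [← pow_add]; congr 1; omega
      have h3 : x ^ (2 * i) * (x⁻¹ ^ 2) ^ i = 1 := by
        rw [← pow_mul, ← mul_pow, mul_inv_cancel₀ hx', one_pow]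
      rw [show x ^ (2 * d) * (x ^ N * (q.coeff i * (x⁻¹ ^ 2) ^ i)) =
        q.coeff i * (x ^ (N + 2 * d) * (x⁻¹ ^ 2) ^ i) by rw [pow_add]; ring, this, mul_assoc (x ^ _), h3, mul_one]
    · exact (Set.finite_singleton (0 : ℚ)).infinite_compl
  have h2 := congrArg (fun f => f.coeff (N - 2 * j + 2 * d)) h1
  simp only [coeff_X_pow_mul, finsetSum_coeff, coeff_C_mul, coeff_X_pow] at h2
  rw [h2]
  by_cases hjd : j ≤ q.natDegree
  · rw [Finset.sum_eq_single j]
    · rw [if_pos (by omega), mul_one]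
    · intro i hi hij
      have hi' := Finset.mem_range.mp hi
      rw [if_neg (by omega), mul_zero]
    · intro hn; exact absurd (Finset.mem_range.mpr (by omega)) hn
  · rw [coeff_eq_zero_of_natDegree_lt (by omega)]
    refine Finset.sum_eq_zero fun i hi => ?_
    have hi' := Finset.mem_range.mp hi
    rw [if_neg (by omega), mul_zero]

theorem gauss (n : ℕ) : 2 * (∑ i ∈ Finset.range n, (i : ℤ)) = n * n - n := by
  induction n with
  | zero => simp
  | succ n ih => rw [Finset.sum_range_succ, mul_add, ih]; push_cast; ring

end WH

namespace WH
open Polynomial Matrix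

/-- Nodes of the set `D`, first parametrization. -/
def f1 (l : List ℕ) (z : ℕ) : Fin z ⊕ Fin l.length → ℕ :=
  Sum.elim (fun t => (t : ℕ)) (fun i => degVec l i + z)

/-- Nodes of the set `D`, second parametrization. -/
def f2 {p q : ℕ} (a : Fin p → ℕ) (b : Fin q → ℕ) (K : ℕ) : (Fin q ⊕ Fin K) ⊕ Fin (p + q) → ℕ :=
  Sum.elim (Sum.elim (fun t => 2 * (t : ℕ)) (fun t => 2 * (t : ℕ) + 1))
    (Fin.append (fun i => 2 * (a i + q)) (fun j => 2 * (b j + K) + 1))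

theorem f1_inj (l : List ℕ) (z : ℕ) (hl : Function.Injective (degVec l)) :
    Function.Injective (f1 l z) := by
  rintro (x | x) (y | y) h <;> simp only [f1, Sum.elim_inl, Sum.elim_inr] at h
  · rw [Fin.ext h]
  · have := x.2; omega
  · have := y.2; omega
  · rw [hl (show degVec l x = degVec l y by omega)]

theorem f2_inj {p q : ℕ} (a : Fin p → ℕ) (b : Fin q → ℕ) (K : ℕ) (ha : Function.Injective a)
    (hb : Function.Injective b) : Function.Injective (f2 a b K) := by
  rintro ((x | x) | x) ((y | y) | y) h
  · simp only [f2, Sum.elim_inl, Sum.elim_inr] at h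
    rw [Fin.ext (show (x : ℕ) = y by omega)]
  · simp only [f2, Sum.elim_inl, Sum.elim_inr] at h
    omega
  · have := x.2
    induction y using Fin.addCases <;>
    simp only [f2, Sum.elim_inl, Sum.elim_inr, Fin.append_left, Fin.append_right] at h <;> omega
  · simp only [f2, Sum.elim_inl, Sum.elim_inr] at h
    omega
  · simp only [f2, Sum.elim_inl, Sum.elim_inr] at h
    rw [Fin.ext (show (x : ℕ) = y by omega)]
  · have := x.2
    induction y using Fin.addCases <;>
    simp only [f2, Sum.elim_inl, Sum.elim_inr, Fin.append_left, Fin.append_right] at h <;> omega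
  · have := y.2
    induction x using Fin.addCases <;>
    simp only [f2, Sum.elim_inl, Sum.elim_inr, Fin.append_left, Fin.append_right] at h <;> omega
  · have := y.2
    induction x using Fin.addCases <;>
    simp only [f2, Sum.elim_inl, Sum.elim_inr, Fin.append_left, Fin.append_right] at h <;> omega
  · induction x using Fin.addCases with
    | left x =>
      induction y using Fin.addCases with
      | left y =>
        simp only [f2, Sum.elim_inr, Fin.append_left] at h
        rw [ha (show a x = a y by omega)]
      | right y =>
        simp only [f2, Sum.elim_inr, Fin.append_left, Fin.append_right] at h
        omega
    | right x =>
      induction y using Fin.addCases with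
      | left y =>
        simp only [f2, Sum.elim_inr, Fin.append_left, Fin.append_right] at h
        omega
      | right y =>
        simp only [f2, Sum.elim_inr, Fin.append_right] at h
        rw [hb (show b x = b y by omega)]

theorem phi_equiv (μ ν : List ℕ) (hμ : IsPartition μ) (hν : IsPartition ν) (k : ℕ) :
    Function.Injective (degVec (Phi μ ν k)) ∧ ∃ z : ℕ,
    ∃ e : (Fin ν.length ⊕ Fin (μ.length + k)) ⊕ Fin (μ.length + ν.length) ≃
      Fin z ⊕ Fin (Phi μ ν k).length,
      ∀ i, f1 (Phi μ ν k) z (e i) = f2 (degVec μ) (degVec ν) (μ.length + k) i := by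
  obtain ⟨z, hz, hinj⟩ := phi_struct _ (Phi μ ν k) rfl
  refine ⟨hinj, z, ?_⟩
  apply exists_equiv _ _ (f1_inj _ _ hinj)
    (f2_inj _ _ _ (degVec_injective _ hμ.1) (degVec_injective _ hν.1))
  ext d
  trans (d < z ∨ ∃ i, d = degVec (Phi μ ν k) i + z)
  · simp only [Set.mem_range, Sum.exists, f1, Sum.elim_inl, Sum.elim_inr]
    refine or_congr ⟨?_, ?_⟩ ⟨?_, ?_⟩
    · rintro ⟨t, rfl⟩; exact t.2
    · intro h; exact ⟨⟨d, h⟩, rfl⟩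
    · rintro ⟨t, rfl⟩; exact ⟨t, rfl⟩
    · rintro ⟨t, rfl⟩; exact ⟨t, rfl⟩
  · rw [← hz d]
    simp only [Finset.mem_union, Finset.mem_image, Finset.mem_univ, true_and, Finset.mem_range,
      Set.mem_range, Sum.exists, f2, Sum.elim_inl, Sum.elim_inr]
    constructor
    · rintro (((⟨i, rfl⟩ | ⟨t, ht, rfl⟩) | ⟨i, rfl⟩) | ⟨t, ht, rfl⟩)
      · exact Or.inr ⟨Fin.castAdd _ i, by simp⟩
      · exact Or.inl (Or.inl ⟨⟨t, ht⟩, rfl⟩)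
      · exact Or.inr ⟨Fin.natAdd _ i, by simp [add_assoc]⟩
      · exact Or.inl (Or.inr ⟨⟨t, ht⟩, rfl⟩)
    · rintro ((⟨t, rfl⟩ | ⟨t, rfl⟩) | ⟨i, rfl⟩)
      · exact Or.inl (Or.inl (Or.inr ⟨t, t.2, rfl⟩))
      · exact Or.inr ⟨t, t.2, rfl⟩
      · induction i using Fin.addCases with
        | left i => exact Or.inl (Or.inl (Or.inl ⟨i, by simp⟩))
        | right i => exact Or.inl (Or.inr ⟨i, by simp [add_assoc]⟩)

theorem phi_sum (μ ν : List ℕ) (hμ : IsPartition μ) (hν : IsPartition ν) (k : ℕ) :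
    (Phi μ ν k).sum = k * (k + 1) / 2 + 2 * (μ.sum + ν.sum) := by
  have hpe := phi_equiv μ ν hμ hν k
  generalize Phi μ ν k = l at hpe ⊢
  obtain ⟨-, z, e, he⟩ := hpe
  have hs : ∑ i, f1 l z i = ∑ i, f2 (degVec μ) (degVec ν) (μ.length + k) i := by
    rw [← e.sum_comp]; exact Finset.sum_congr rfl fun i _ => he i
  have hc := Fintype.card_congr e
  simp only [Fintype.card_sum, Fintype.card_fin] at hc
  simp only [f1, f2, Fintype.sum_sum_type, Sum.elim_inl, Sum.elim_inr] at hs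
  rw [Fin.sum_univ_add (fun i : Fin (μ.length + ν.length) => Fin.append _ _ i)] at hs
  simp only [Fin.append_left, Fin.append_right] at hs
  simp only [Finset.sum_add_distrib, ← Finset.mul_sum, sum_degVec, Finset.sum_const,
    Finset.card_univ, Fintype.card_fin, smul_eq_mul, mul_one, mul_add] at hs
  simp only [Fin.sum_univ_eq_sum_range (fun i => i)] at hs
  have key : 2 * l.sum = k * (k + 1) + 4 * (μ.sum + ν.sum) := by
    zify at hs hc ⊢
    have g1 := gauss z
    have g2 := gauss l.length
    have g3 := gauss μ.length
    have g4 := gauss ν.length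
    have g5 := gauss (μ.length + k)
    push_cast at g5
    have hc2 : (l.length : ℤ) = 2 * μ.length + 2 * ν.length + k - z := by linarith
    rw [hc2] at hs g2
    linear_combination 2 * hs - g1 - g2 + 2 * g3 + 4 * g4 + 2 * g5
  generalize k * (k + 1) = w at *
  omega

theorem phi_eval (μ ν : List ℕ) (hμ : IsPartition μ) (hν : IsPartition ν) (B0 : ℕ)
    (ha : ∀ i, degVec μ i < B0) (hb : ∀ i, degVec ν i < B0) (Q : ℚ[X][X])
    (hQ : ∀ k0 z0 : ℚ,
      (Matrix.of fun i s : Fin (μ.length + ν.length) => ∑ m ∈ Finset.range B0,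
        (z0 ^ m * gw (2 * k0 + (2 * (μ.length : ℚ) - 2 * ν.length + 1))
          (nodes (2 * k0 + (2 * (μ.length : ℚ) - 2 * ν.length + 1)) (degVec μ) (degVec ν) i) m) *
          (nodes (2 * k0 + (2 * (μ.length : ℚ) - 2 * ν.length + 1)) (degVec μ) (degVec ν) i
            - 2 * (m : ℚ)) ^ (s : ℕ)).det =
      (vandermonde (nodes (2 * k0 + (2 * (μ.length : ℚ) - 2 * ν.length + 1))
        (degVec μ) (degVec ν))).det * Q.eval₂ (evalRingHom k0) z0) (k : ℕ) (x : ℚ) (hx : x ≠ 0) :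
    (HeW (Phi μ ν k)).eval x = x ^ (Phi μ ν k).sum * Q.eval₂ (evalRingHom (k : ℚ)) (x⁻¹ ^ 2) := by
  have hpe := phi_equiv μ ν hμ hν k
  generalize Phi μ ν k = l at hpe ⊢
  obtain ⟨hinj, z, e, he⟩ := hpe
  set z0 : ℚ := x⁻¹ ^ 2 with hz0
  obtain ⟨B, hB0, hBpos, hBl⟩ : ∃ B, B0 ≤ B ∧ 0 < B ∧ ∀ i, degVec l i < B := by
    refine ⟨B0 + 1 + ∑ i, degVec l i, by omega, by omega, fun i => ?_⟩
    have := Finset.single_le_sum (f := degVec l) (fun _ _ => Nat.zero_le _) (Finset.mem_univ i)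
    omega
  set u1 : Fin z ⊕ Fin l.length → ℚ := fun i => (f1 l z i : ℚ) with hu1
  have hu1i : Function.Injective u1 := fun i j h => f1_inj l z hinj (Nat.cast_injective h)
  obtain ⟨M1, hM1⟩ := rep_exists B u1 hu1i (fun i m => wt z0 (u1 i) m)
  obtain ⟨Ml, hMl, hdl⟩ := rep_remove hBpos hu1i hM1 (fun b => wt_at_zero _ _)
    (fun b m => by
      by_cases h : (b : ℕ) < 2 * m
      · exact Or.inl (wt_zero z0 b m h)
      · refine Or.inr ⟨⟨(b : ℕ) - 2 * m, by omega⟩, ?_⟩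
        simp only [hu1, f1, Sum.elim_inl]
        rw [Nat.cast_sub (by omega)]
        push_cast; ring)
    (fun i => wt z0 (degVec l i))
    (fun t m => by
      have := wt_shift z0 (u1 (Sum.inr t)) z m
      rw [show u1 (Sum.inr t) - z = degVec l t by simp [hu1, f1]] at this
      exact this)
  have hMl' := rep_shift _ _ _ _ (z : ℚ) hMl
  have hH := HeW_eval l hinj B hBl x hx Ml (by
    convert hMl' using 2
    simp [hu1, f1])
  rw [hH, hdl]
  congr 1
  have hM2 := rep_reindex _ _ _ _ e hM1
  have hu2 : ∀ i, u1 (e i) = (f2 (degVec μ) (degVec ν) (μ.length + k) i : ℚ) := fun i => by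
    simp only [hu1, he]
  set c : ℚ := 2 * k + (2 * (μ.length : ℚ) - 2 * ν.length + 1) with hc
  have hnode : ∀ t, u1 (e (Sum.inr t)) - 2 * (ν.length : ℚ) = nodes c (degVec μ) (degVec ν) t := by
    intro t
    rw [hu2]
    induction t using Fin.addCases with
    | left t => simp [f2, nodes]; ring
    | right t => simp [f2, nodes, hc]; ring
  obtain ⟨Mt, hMt, hdt⟩ := rep_remove hBpos (hu1i.comp e.injective) hM2 (fun b => wt_at_zero _ _)
    (fun b m => by
      rcases b with b | b
      · by_cases h : (b : ℕ) < m
        · left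
          rw [hu2]
          exact wt_zero z0 (2 * b) m (by omega)
        · refine Or.inr ⟨Sum.inl ⟨(b : ℕ) - m, by omega⟩, ?_⟩
          simp only [Function.comp, hu2, f2, Sum.elim_inl]
          push_cast [Nat.cast_sub (show m ≤ (b : ℕ) by omega)]
          ring
      · by_cases h : (b : ℕ) < m
        · left
          rw [hu2]
          exact wt_zero z0 (2 * b + 1) m (by omega)
        · refine Or.inr ⟨Sum.inr ⟨(b : ℕ) - m, by omega⟩, ?_⟩
          simp only [Function.comp, hu2, f2, Sum.elim_inl, Sum.elim_inr]
          push_cast [Nat.cast_sub (show m ≤ (b : ℕ) by omega)]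
          ring)
    (fun t m => z0 ^ m * gw c (nodes c (degVec μ) (degVec ν) t) m)
    (fun t m => by
      have := wt_two z0 (u1 (e (Sum.inr t))) c ν.length (μ.length + k) m
        (by rw [hc]; push_cast; ring)
      rw [hnode] at this
      simp only [Function.comp, Fintype.prod_sum_type]
      simp only [hu2 (Sum.inl _)]
      exact this)
  have hMt' := rep_shift _ _ _ _ (2 * (ν.length : ℚ)) hMt
  have hMt2 : Rep B (nodes c (degVec μ) (degVec ν))
      (fun t m => z0 ^ m * gw c (nodes c (degVec μ) (degVec ν) t) m) Mt := by
    convert hMt' using 2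
    exact (hnode _).symm
  have hMt3 := rep_trunc hB0 (fun i m hm => by
    show z0 ^ m * gw c (nodes c (degVec μ) (degVec ν) i) m = 0
    rw [gw_nodes_zero c _ _ B0 ha hb i m hm, mul_zero]) hMt2
  have hdet := rep_det hMt3 (fun s => X ^ (s : ℕ)) (fun s => natDegree_X_pow _)
    (fun s => monic_X_pow _)
  simp only [eval_pow, eval_X] at hdet
  rw [hQ k z0, mul_comm] at hdet
  have hv : (vandermonde (nodes c (degVec μ) (degVec ν))).det ≠ 0 := by
    rw [det_vandermonde_ne_zero_iff]
    intro i j hij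
    rw [← hnode, ← hnode] at hij
    exact Sum.inr_injective (e.injective (hu1i (by linarith)))
  have := mul_right_cancel₀ hv hdet
  rw [this, hdt, det_submatrix_equiv_self]

end WH

/-- For a fixed 2-quotient `(μ,ν)`, the `j`-th coefficient of the remainder polynomial
of `He_{Φ(μ,ν,k)}` (i.e. the coefficient of `X^{N_k − 2j}` where
`N_k = k(k+1)/2 + 2(|μ|+|ν|) = |Φ(μ,ν,k)|`) is a polynomial in the core length `k`
of degree at most `j`, whose coefficient of `X^j` is
`2^j · Σ_{l=0}^{j} (−1)^l C(|μ|, j−l) C(|ν|, l)`. -/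
theorem wronskianHermite_coeff_polynomial_in_coreLength (μ ν : List ℕ)
    (hμ : IsPartition μ) (hν : IsPartition ν) (j : ℕ) (hj : j ≤ μ.sum + ν.sum) :
    ∃ P : Polynomial ℚ, P.natDegree ≤ j ∧
      P.coeff j = 2 ^ j * ∑ l ∈ Finset.range (j + 1),
        (-1 : ℚ) ^ l * (μ.sum.choose (j - l) : ℚ) * (ν.sum.choose l : ℚ) ∧
      ∀ k : ℕ,
        (HeW (Phi μ ν k)).coeff (k * (k + 1) / 2 + 2 * (μ.sum + ν.sum) - 2 * j) =
          P.eval (k : ℚ) := by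
  obtain ⟨B, hBa, hBb⟩ : ∃ B, (∀ i, degVec μ i < B) ∧ ∀ i, degVec ν i < B := by
    refine ⟨1 + ∑ i, degVec μ i + ∑ i, degVec ν i, fun i => ?_, fun i => ?_⟩
    · have := Finset.single_le_sum (f := degVec μ) (fun _ _ => Nat.zero_le _) (Finset.mem_univ i)
      omega
    · have := Finset.single_le_sum (f := degVec ν) (fun _ _ => Nat.zero_le _) (Finset.mem_univ i)
      omega
  obtain ⟨Q, hQ, hLC⟩ := WH.main_Q (degVec μ) (degVec ν) B μ.sum ν.sum hBa hBb
    (WH.degVec_injective _ hμ.1) (WH.degVec_injective _ hν.1) (WH.sum_degVec μ) (WH.sum_degVec ν)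
    (2 * (μ.length : ℚ) - 2 * ν.length + 1)
  refine ⟨Q.coeff j, (hLC j).1, (hLC j).2, fun k => ?_⟩
  rw [WH.coeff_of_eval _ (Q.map (Polynomial.evalRingHom (k : ℚ))) _ j (by omega),
    Polynomial.coeff_map, Polynomial.coe_evalRingHom]
  intro x hx
  rw [WH.phi_eval μ ν hμ hν B hBa hBb Q hQ k x hx, WH.phi_sum μ ν hμ hν k, Polynomial.eval_map]
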